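/- There is no maximal subtree of ([ω]^ω, ⊆*) with all levels countable. That is, if T is a subtree of the partial order of infinite subsets of ω under almost-inclusion and every level of T is countable, then T admits a proper end-extension. -/

import Mathlib

/-- `A ⊆* B`: almost inclusion, `A \ B` is finite. -/
def AlmostSubset (A B : Set ℕ) : Prop := (A \ B).Finite

/-- `A` and `B` are `⊆*`-incomparable. -/
def StarIncomp (A B : Set ℕ) : Prop := ¬ AlmostSubset A B ∧ ¬ AlmostSubset B A

/-- The predecessors of `t` in `T` with respect to `⊆*` (including `t` itself). -/
def StarPred (T : Set (Set ℕ)) (t : Set ℕ) : Set (Set ℕ) := {s ∈ T | AlmostSubset t s}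

/-- `T` is a subtree of `([ω]^ω, ⊆*)`: all members are infinite, the largest element
`ω` belongs to `T`, distinct members of `T` are not almost equal (so `⊆*` is a genuine
partial order on `T`), and the predecessors of each node are well-ordered by reverse
`⊆*` (every nonempty subset of a predecessor set has a `⊆*`-greatest element). -/
def IsStarTree (T : Set (Set ℕ)) : Prop :=
  (∀ A ∈ T, A.Infinite) ∧ Set.univ ∈ T ∧
    (∀ s ∈ T, ∀ t ∈ T, AlmostSubset s t → AlmostSubset t s → s = t) ∧
    ∀ t ∈ T, ∀ S ⊆ StarPred T t, S.Nonempty → ∃ m ∈ S, ∀ s ∈ S, AlmostSubset s m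

/-- `T` end-extends `S` (as subtrees of `([ω]^ω, ⊆*)`). -/
def StarEndExt (S T : Set (Set ℕ)) : Prop :=
  S ⊆ T ∧ ∀ s ∈ S, StarPred T s = StarPred S s

/-- `T` is a maximal subtree of `([ω]^ω, ⊆*)`: for every infinite `C ⊆ ω` either some
`B ∈ T` satisfies `B ⊆* C`, or there are `⊆*`-incomparable `B, B' ∈ T` with
`C ⊆* B` and `C ⊆* B'`. -/
def IsMaxStarTree (T : Set (Set ℕ)) : Prop :=
  IsStarTree T ∧ ∀ C : Set ℕ, C.Infinite →
    (∃ B ∈ T, AlmostSubset B C) ∨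
      ∃ B ∈ T, ∃ B' ∈ T, StarIncomp B B' ∧ AlmostSubset C B ∧ AlmostSubset C B'

/-- `s` and `t` lie on the same level of `T`: their predecessor sets (which are
well-orders under `⊆*`) are order isomorphic, i.e. have the same order type. -/
def SameLevel (T : Set (Set ℕ)) (s t : Set ℕ) : Prop :=
  Nonempty ((fun a b : StarPred T s => AlmostSubset a.1 b.1) ≃r
    (fun a b : StarPred T t => AlmostSubset a.1 b.1))

/-- `T` has countable levels. -/
def CountableLevels (T : Set (Set ℕ)) : Prop :=
  ∀ t ∈ T, {s ∈ T | SameLevel T s t}.Countable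

section Abs

variable {α : Type*} [PartialOrder α]

def OffP (P : Set α) : Set α := {m | m ∉ P ∧ ∀ s, m < s → s ∈ P}

variable [WellFoundedGT α]

noncomputable def rkk (a : α) : Ordinal := IsWellFounded.rank (α := α) (· > ·) a

lemma rkk_anti {a b : α} (h : a < b) : rkk b < rkk a :=
  IsWellFounded.rank_lt_of_rel (r := fun x y : α => x > y) h

lemma rkk_lt {a : α} {β : Ordinal} (h : β < rkk a) : ∃ b, a < b ∧ β ≤ rkk b := by
  unfold rkk at h
  rw [IsWellFounded.rank_eq] at h
  obtain ⟨⟨b, hb⟩, h2⟩ := (Ordinal.lt_iSup_iff).1 h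
  exact ⟨b, hb, Order.lt_succ_iff.1 h2⟩

lemma rkk_congr {a b : α} (h : Set.Ioi a = Set.Ioi b) : rkk a = rkk b := by
  apply le_antisymm
  · by_contra! hlt
    obtain ⟨c, hc, hc2⟩ := rkk_lt hlt
    have : c ∈ Set.Ioi b := h ▸ hc
    exact absurd (rkk_anti this) (not_lt.2 hc2)
  · by_contra! hlt
    obtain ⟨c, hc, hc2⟩ := rkk_lt hlt
    have : c ∈ Set.Ioi a := h ▸ hc
    exact absurd (rkk_anti this) (not_lt.2 hc2)

lemma rkk_anc (a : α) : ∀ β ≤ rkk a, ∃ b, a ≤ b ∧ rkk b = β := by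
  induction a using WellFoundedGT.induction with
  | ind a ih =>
    intro β hβ
    rcases hβ.eq_or_lt with h | h
    · exact ⟨a, le_rfl, h.symm⟩
    · obtain ⟨c, hc, hc2⟩ := rkk_lt h
      obtain ⟨b, hb, hb2⟩ := ih c hc β hc2
      exact ⟨b, hc.le.trans hb, hb2⟩

lemma exists_offP {P : Set α} {s : α} (hs : s ∉ P) : ∃ m ∈ OffP P, s ≤ m := by
  obtain ⟨m, ⟨hm1, hm2⟩, hm⟩ := (wellFounded_gt (α := α)).has_min {m | s ≤ m ∧ m ∉ P} ⟨s, le_rfl, hs⟩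
  refine ⟨m, ⟨hm2, fun x hx => ?_⟩, hm1⟩
  by_contra hxP
  exact hm x ⟨hm1.trans hx.le, hxP⟩ hx

lemma off_hered {P Q : Set α} (hPQ : P ⊆ Q) (hQ : IsChain (· ≤ ·) Q) (h : (OffP Q).Countable) :
    (OffP P).Countable := by
  have h2 : (Q ∩ OffP P).Subsingleton := by
    rintro x ⟨hx, hx1, hx2⟩ y ⟨hy, hy1, hy2⟩
    by_contra hne
    rcases hQ hx hy hne with h | h
    · exact hy1 (hx2 _ (lt_of_le_of_ne h hne))
    · exact hx1 (hy2 _ (lt_of_le_of_ne h (Ne.symm hne)))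
  refine (h.union h2.countable).mono ?_
  rintro x ⟨hx1, hx2⟩
  by_cases hx : x ∈ Q
  · exact Or.inr ⟨hx, hx1, hx2⟩
  · exact Or.inl ⟨hx, fun s hs => hPQ (hx2 s hs)⟩

lemma countM (hl : ∀ β, {a : α | rkk a = β}.Countable) (P : Set α) :
    {s : α | Set.Ioi s = P}.Countable := by
  rcases Set.eq_empty_or_nonempty {s : α | Set.Ioi s = P} with h | ⟨t, ht⟩
  · simp [h]
  · refine (hl (rkk t)).mono ?_
    intro s hs
    exact rkk_congr (hs.trans ht.symm)

def Gd (t : α) : Prop := (OffP (Set.Ici t)).Countable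

lemma goodL (hl : ∀ β, {a : α | rkk a = β}.Countable) {Q : Set α} {s : α}
    (hQ : IsChain (· ≤ ·) Q) (h : (OffP Q).Countable) (hs : Set.Ioi s ⊆ Q) : Gd s := by
  refine ((off_hered hs hQ h).union (countM hl (Set.Ici s))).mono ?_
  rintro r ⟨h1, h2⟩
  by_cases hr : r < s
  · right
    ext x
    exact ⟨fun hx => h2 x hx, fun hx => lt_of_lt_of_le hr hx⟩
  · left
    refine ⟨fun h => h1 (le_of_lt h), fun x hx => ?_⟩
    exact lt_of_le_of_ne (h2 x hx) (by rintro rfl; exact hr hx)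

lemma chainIci (hc : ∀ a b c : α, a ≤ b → a ≤ c → b ≤ c ∨ c ≤ b) (t : α) :
    IsChain (· ≤ ·) (Set.Ici t) := fun x hx y hy _ => hc t x y hx hy

def ExtH (α : Type*) [PartialOrder α] : Prop :=
  ∀ b : ℕ → α, Antitone b → (OffP {p | ∃ n, b n ≤ p}).Countable →
    ∃ B0 B1 : α, ¬ B0 ≤ B1 ∧ ¬ B1 ≤ B0 ∧ ∀ n, B0 ≤ b n ∧ B1 ≤ b n

lemma splitL (hc : ∀ a b c : α, a ≤ b → a ≤ c → b ≤ c ∨ c ≤ b)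
    (hl : ∀ β, {a : α | rkk a = β}.Countable) (hE : ExtH α) (t : α) (ht : Gd t) :
    ∃ g0 g1 : α, Gd g0 ∧ Gd g1 ∧ g0 ≤ t ∧ g1 ≤ t ∧ ¬ g0 ≤ g1 ∧ ¬ g1 ≤ g0 := by
  by_contra hno
  have key : ∀ s : α, s ≤ t → Gd s := by
    intro s
    induction s using WellFoundedGT.induction with
    | ind s ih =>
      intro hst
      have hch : IsChain (· ≤ ·) (Set.Ioi s) :=
        (chainIci hc s).mono Set.Ioi_subset_Ici_self
      rcases hst.eq_or_lt with rfl | hst'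
      · exact ht
      refine goodL hl hch (Set.Countable.mono ?_ (ht.union (countM hl (Set.Ioi s)))) le_rfl
      rintro r ⟨h1, h2⟩
      by_cases hall : ∀ q, s < q → r < q
      · right
        ext x
        exact ⟨h2 x, hall x⟩
      push Not at hall
      obtain ⟨q, hsq, hrq⟩ := hall
      have hrq' : ¬ r ≤ q := fun h => by
        rcases h.eq_or_lt with rfl | h
        · exact h1 hsq
        · exact hrq h
      by_cases hrt : r ≤ t
      · exfalso
        have hqt : q ≤ t := by
          rcases hc s q t hsq.le hst with h | h
          · exact h
          · exact absurd (hrt.trans h) hrq'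
        have hq := ih q hsq hqt
        have hr : Gd r := by
          refine goodL hl (chainIci hc q) hq ?_
          intro v hv
          rcases hc s v q (h2 v hv).le hsq.le with h | h
          · exact absurd (hv.le.trans h) hrq'
          · exact h
        refine hno ⟨r, q, hr, hq, hrt, hqt, hrq', fun h => h1 (lt_of_lt_of_le hsq h)⟩
      · left
        refine ⟨fun h => h1 (lt_of_lt_of_le hst' h), fun v hv => ?_⟩
        rcases hc s v t (h2 v hv).le hst with h | h
        · exact absurd (hv.le.trans h) hrt
        · exact h
  have e : {p : α | ∃ n : ℕ, (fun _ : ℕ => t) n ≤ p} = Set.Ici t := by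
    ext x; simp
  obtain ⟨B0, B1, h0, h1, h⟩ := hE (fun _ => t) (fun _ _ _ => le_rfl) (by rw [e]; exact ht)
  exact hno ⟨B0, B1, key _ (h 0).1, key _ (h 0).2, (h 0).1, (h 0).2, h0, h1⟩

lemma seqL (hc : ∀ a b c : α, a ≤ b → a ≤ c → b ≤ c ∨ c ≤ b)
    (hl : ∀ β, {a : α | rkk a = β}.Countable) (hE : ExtH α) (b : ℕ → α) (hb : Antitone b)
    (hg : ∀ n, Gd (b n)) : ∃ g, Gd g ∧ ∀ n, g ≤ b n := by
  set P : Set α := {p | ∃ n, b n ≤ p} with hP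
  have hch : IsChain (· ≤ ·) P := by
    rintro x ⟨n, hn⟩ y ⟨m, hm⟩ _
    exact hc (b (max n m)) x y ((hb (le_max_left _ _)).trans hn) ((hb (le_max_right _ _)).trans hm)
  have hoff : (OffP P).Countable := by
    refine ((Set.countable_iUnion (fun n => hg n)).union (countM hl P)).mono ?_
    rintro s ⟨h1, h2⟩
    by_cases hall : ∀ p ∈ P, s < p
    · right
      ext x
      exact ⟨h2 x, hall x⟩
    left
    push Not at hall
    obtain ⟨p, ⟨n, hn⟩, hsp⟩ := hall
    refine Set.mem_iUnion.2 ⟨n, fun h => h1 ⟨n, h⟩, fun v hv => ?_⟩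
    have hsb : ¬ s ≤ b n := fun h => by
      rcases (h.trans hn).eq_or_lt with rfl | h
      · exact h1 ⟨n, hn⟩
      · exact hsp h
    by_cases hne : v = b n
    · exact hne.ge
    rcases hch (h2 v hv) (⟨n, le_rfl⟩ : b n ∈ P) hne with h | h
    · exact absurd (hv.le.trans h) hsb
    · exact h
  obtain ⟨B, _, _, _, hB⟩ := hE b hb hoff
  by_cases hBP : B ∈ P
  · obtain ⟨n, hn⟩ := hBP
    have : B = b n := le_antisymm (hB n).1 hn
    exact ⟨B, this ▸ hg n, fun n => (hB n).1⟩
  · obtain ⟨m, hm, hBm⟩ := exists_offP hBP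
    refine ⟨m, goodL hl hch hoff hm.2, fun n => ?_⟩
    rcases hc B m (b n) hBm (hB n).1 with h | h
    · exact h
    · exact absurd ⟨n, h⟩ hm.1

theorem absMain [Nonempty α] (hc : ∀ a b c : α, a ≤ b → a ≤ c → b ≤ c ∨ c ≤ b)
    (hl : ∀ β, {a : α | rkk a = β}.Countable) (hE : ExtH α) : False := by
  -- a good node
  obtain ⟨m0, -, hm0⟩ := (wellFounded_gt (α := α)).has_min Set.univ Set.univ_nonempty
  have hgm0 : Gd m0 := by
    refine goodL (Q := ∅) hl (by simp) ((countM hl ∅).mono ?_) ?_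
    · rintro r ⟨-, h⟩
      ext x
      exact ⟨h x, fun h => h.elim⟩
    · intro x hx
      exact hm0 x trivial hx
  let ρ : α → Ordinal := fun t => ⨆ g : {g : α // Gd g ∧ g ≤ t}, Order.succ (rkk g.1)
  obtain ⟨t, ht, hmin⟩ := (InvImage.wf ρ Ordinal.lt_wf).has_min {t | Gd t} ⟨m0, hgm0⟩
  have hreach : ∀ g, Gd g → g ≤ t → ∀ t', Gd t' → t' ≤ t →
      ∃ g', Gd g' ∧ g' ≤ t' ∧ rkk g ≤ rkk g' := by
    intro g hg hgt t' ht' htt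
    have h1 : ρ t ≤ ρ t' := not_lt.1 (hmin t' ht')
    have h2 : rkk g < ρ t := Ordinal.lt_iSup_iff.2 ⟨⟨g, hg, hgt⟩, Order.lt_succ _⟩
    obtain ⟨⟨g', hg', hgt'⟩, h3⟩ := Ordinal.lt_iSup_iff.1 (h2.trans_le h1)
    exact ⟨g', hg', hgt', Order.lt_succ_iff.1 h3⟩
  -- Cantor scheme
  let G := {g : α // Gd g ∧ g ≤ t}
  have hsp : ∀ g : G, ∃ f : Bool → G, (∀ i, (f i).1 ≤ g.1) ∧
      ∀ i j, i ≠ j → ¬ (f i).1 ≤ (f j).1 := by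
    rintro ⟨g, hg, hgt⟩
    obtain ⟨g0, g1, h0, h1, h2, h3, h4, h5⟩ := splitL hc hl hE g hg
    refine ⟨fun i => if i then ⟨g0, h0, h2.trans hgt⟩ else ⟨g1, h1, h3.trans hgt⟩, ?_, ?_⟩
    · rintro (_ | _) <;> simpa
    · rintro (_ | _) (_ | _) <;> simp_all
  choose f hf1 hf2 using hsp
  let S : List Bool → G := fun l => l.rec ⟨t, ht, le_rfl⟩ (fun i _ g => f g i)
  have hS : ∀ i l, S (i :: l) = f (S l) i := fun i l => rfl
  -- a bound for all ranks
  have hre : ∀ (n : ℕ) (g : G), ∃ g' : G, g'.1 ≤ g.1 ∧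
      ∀ l : List Bool, Encodable.encode l = n → rkk (S l).1 ≤ rkk g'.1 := by
    rintro n ⟨g, hg, hgt⟩
    by_cases h : ∃ l : List Bool, Encodable.encode l = n
    · obtain ⟨l, hl⟩ := h
      obtain ⟨g', h1, h2, h3⟩ := hreach (S l).1 (S l).2.1 (S l).2.2 g hg hgt
      refine ⟨⟨g', h1, h2.trans hgt⟩, h2, fun l' hl' => ?_⟩
      have : l' = l := Encodable.encode_injective (hl'.trans hl.symm)
      rw [this]; exact h3
    · exact ⟨⟨g, hg, hgt⟩, le_rfl, fun l hl => absurd ⟨l, hl⟩ h⟩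
  choose e he1 he2 using hre
  let c : ℕ → G := fun n => n.rec ⟨t, ht, le_rfl⟩ (fun n g => e n g)
  obtain ⟨u, hu, huc⟩ := seqL hc hl hE (fun n => (c n).1)
    (antitone_nat_of_succ_le fun n => he1 n (c n)) (fun n => (c n).2.1)
  have hut : u ≤ t := huc 0
  have hrk : ∀ l, rkk (S l).1 ≤ rkk u := by
    intro l
    refine (he2 _ (c (Encodable.encode l)) l rfl).trans ?_
    rcases (huc (Encodable.encode l + 1)).eq_or_lt with h | h
    · rw [h]
    · exact (rkk_anti h).le
  -- branches
  let br : (ℕ → Bool) → ℕ → List Bool := fun x n => n.rec [] (fun n l => x n :: l)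
  have hbr : ∀ x n, br x (n + 1) = x n :: br x n := fun x n => rfl
  have hnode : ∀ x : ℕ → Bool, ∃ a, rkk a = rkk u ∧ ∀ n, a ≤ (S (br x n)).1 := by
    intro x
    obtain ⟨g, hg, hgx⟩ := seqL hc hl hE (fun n => (S (br x n)).1)
      (antitone_nat_of_succ_le fun n => hf1 _ _) (fun n => (S (br x n)).2.1)
    obtain ⟨g', h1, h2, h3⟩ := hreach u hu hut g hg (hgx 0)
    obtain ⟨a, ha, hra⟩ := rkk_anc g' _ h3
    refine ⟨a, hra, fun n => ?_⟩
    rcases hc g' a (S (br x n)).1 ha (h2.trans (hgx n)) with h | h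
    · exact h
    · rcases h.eq_or_lt with h | h
      · exact h.ge
      · exact absurd (rkk_anti h) (not_lt.2 (hra ▸ hrk _))
  choose A hA1 hA2 using hnode
  have hinj : Function.Injective A := by
    intro x y hxy
    by_contra hne
    have hex : ∃ n, x n ≠ y n := Function.ne_iff.1 hne
    classical
    let n := Nat.find hex
    have hn : x n ≠ y n := Nat.find_spec hex
    have hpre : ∀ m ≤ n, br x m = br y m := by
      intro m
      induction m with
      | zero => intro _; rfl
      | succ m ih =>
        intro hm
        rw [hbr, hbr, ih (by omega)]
        have : x m = y m := by
          by_contra h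
          exact Nat.find_min hex (m := m) (by omega) h
        rw [this]
    have h1 := hA2 x (n + 1)
    have h2 := hA2 y (n + 1)
    rw [hbr, hS] at h1 h2
    rw [← hxy, ← hpre n le_rfl] at h2
    rcases hc _ _ _ h1 h2 with h | h
    · exact hf2 _ _ _ hn h
    · exact hf2 _ _ _ hn.symm h
  have hcount : Countable (ℕ → Bool) := by
    have : Countable {a : α | rkk a = rkk u} := (hl _).to_subtype
    exact Function.Injective.countable (f := fun x => (⟨A x, hA1 x⟩ : {a : α | rkk a = rkk u}))
      (fun x y h => hinj (congrArg Subtype.val h))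
  obtain ⟨F, hF⟩ := exists_injective_nat (ℕ → Bool)
  classical
  refine Function.cantor_injective (fun S : Set ℕ => F (fun n => decide (n ∈ S))) ?_
  intro S S' h
  ext n
  simpa using congrFun (hF h) n

end Abs

lemma as_refl (A : Set ℕ) : AlmostSubset A A := by simp [AlmostSubset]

lemma as_trans {A B C : Set ℕ} (h1 : AlmostSubset A B) (h2 : AlmostSubset B C) :
    AlmostSubset A C := by
  refine (Set.Finite.union h1 h2).subset ?_
  rintro x ⟨hx, hx2⟩
  by_cases h : x ∈ B
  · exact Or.inr ⟨h, hx2⟩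
  · exact Or.inl ⟨hx, h⟩

lemma star_diag (b : ℕ → Set ℕ) (hb : ∀ j k, j ≤ k → AlmostSubset (b k) (b j))
    (F : Set (Set ℕ)) (hF : F.Countable) (hFb : ∀ s ∈ F, ∀ n, ¬ AlmostSubset (b n) s)
    (hinf : ∀ n, (b n).Infinite) :
    ∃ C0 C1 : Set ℕ, Disjoint C0 C1 ∧ C0.Infinite ∧ C1.Infinite ∧
      (∀ n, AlmostSubset C0 (b n)) ∧ (∀ n, AlmostSubset C1 (b n)) ∧
      (∀ s ∈ F, ¬ AlmostSubset C0 s) ∧ (∀ s ∈ F, ¬ AlmostSubset C1 s) := by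
  obtain ⟨s, hs⟩ := (hF.insert ∅).exists_eq_range (Set.insert_nonempty _ _)
  have hsb : ∀ i n, (b n \ s i).Infinite := by
    intro i n
    have : s i ∈ insert ∅ F := hs ▸ Set.mem_range_self i
    rcases this with h | h
    · rw [h]; simpa using hinf n
    · exact hFb _ h n
  have hfreq : ∀ k, ∃ᶠ x in Filter.atTop, x ∈ (b k \ s k.unpair.1) ∧ ∀ j ≤ k, x ∈ b j := by
    intro k
    rw [Nat.frequently_atTop_iff_infinite]
    have hfin : (⋃ j ∈ Set.Iic k, (b k \ b j)).Finite :=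
      Set.Finite.biUnion (Set.finite_Iic k) (fun j hj => hb j k hj)
    refine ((hsb k.unpair.1 k).sdiff hfin).mono ?_
    rintro x ⟨hx, hx2⟩
    refine ⟨hx, fun j hj => ?_⟩
    by_contra hxj
    exact hx2 (Set.mem_biUnion (x := j) hj ⟨hx.1, hxj⟩)
  obtain ⟨φ, hφ, hp⟩ := Filter.extraction_forall_of_frequently hfreq
  let D : Set ℕ → Set ℕ := fun K => φ '' {k | k.unpair.2 ∈ K}
  have hD1 : ∀ K n, AlmostSubset (D K) (b n) := by
    intro K n
    refine ((Set.finite_Iio n).image φ).subset ?_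
    rintro _ ⟨⟨k, -, rfl⟩, hk⟩
    refine ⟨k, ?_, rfl⟩
    by_contra h
    exact hk ((hp k).2 n (not_lt.1 h))
  have hD2 : ∀ K : Set ℕ, K.Infinite → ∀ i, ¬ AlmostSubset (D K) (s i) := by
    intro K hK i
    have hinj : Set.InjOn (fun j => φ (Nat.pair i j)) K := by
      intro x _ y _ hxy
      have := hφ.injective hxy
      simpa using (Nat.pair_eq_pair.1 this).2
    refine (hK.image hinj).mono ?_
    rintro _ ⟨j, hj, rfl⟩
    refine ⟨⟨Nat.pair i j, by simpa using hj, rfl⟩, ?_⟩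
    have := (hp (Nat.pair i j)).1.2
    simpa using this
  have hD3 : ∀ K : Set ℕ, K.Infinite → (D K).Infinite := by
    intro K hK hfin
    exact hD2 K hK 0 (hfin.subset Set.sdiff_subset)
  have hD4 : ∀ K : Set ℕ, K.Infinite → ∀ r ∈ F, ¬ AlmostSubset (D K) r := by
    intro K hK r hr
    have : r ∈ Set.range s := hs ▸ Set.mem_insert_of_mem _ hr
    obtain ⟨i, rfl⟩ := this
    exact hD2 K hK i
  have hE : {n : ℕ | Even n}.Infinite := by
    refine Set.infinite_of_injective_forall_mem (f := fun n : ℕ => 2 * n) ?_ ?_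
    · intro x y h; simpa using h
    · intro x; simp
  have hO : {n : ℕ | ¬ Even n}.Infinite := by
    refine Set.infinite_of_injective_forall_mem (f := fun n : ℕ => 2 * n + 1) ?_ ?_
    · intro x y h; simpa using h
    · intro x; simp
  refine ⟨D {n | Even n}, D {n | ¬ Even n}, ?_, hD3 _ hE, hD3 _ hO, hD1 _, hD1 _,
    hD4 _ hE, hD4 _ hO⟩
  rw [Set.disjoint_left]
  rintro _ ⟨k, hk, rfl⟩ ⟨k', hk', h⟩
  have := hφ.injective h
  subst this
  exact hk' hk

lemma star_chain {T : Set (Set ℕ)} (hT : IsStarTree T) {a b c : Set ℕ} (ha : a ∈ T) (hb : b ∈ T)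
    (hc : c ∈ T) (hab : AlmostSubset a b) (hac : AlmostSubset a c) :
    AlmostSubset b c ∨ AlmostSubset c b := by
  obtain ⟨m, hm, h⟩ := hT.2.2.2 a ha {b, c} (by
    rintro x (rfl | rfl)
    · exact ⟨hb, hab⟩
    · exact ⟨hc, hac⟩) ⟨b, by simp⟩
  rcases hm with rfl | rfl
  · exact Or.inr (h c (by simp))
  · exact Or.inl (h b (by simp))

lemma star_extend {T : Set (Set ℕ)} (hT : IsStarTree T) {C : Set ℕ} (hC : C.Infinite)
    (h1 : ∀ B ∈ T, ¬ AlmostSubset B C)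
    (h2 : ∀ B ∈ T, ∀ B' ∈ T, AlmostSubset C B → AlmostSubset C B' →
      AlmostSubset B B' ∨ AlmostSubset B' B) :
    ∃ T' : Set (Set ℕ), IsStarTree T' ∧ StarEndExt T T' ∧ T' ≠ T := by
  have hCT : C ∉ T := fun h => h1 C h (as_refl C)
  have hpred : ∀ s ∈ T, StarPred (insert C T) s = StarPred T s := by
    intro s hs
    ext x
    constructor
    · rintro ⟨rfl | hx, hx2⟩
      · exact absurd hx2 (h1 s hs)
      · exact ⟨hx, hx2⟩
    · rintro ⟨hx, hx2⟩
      exact ⟨Or.inr hx, hx2⟩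
  refine ⟨insert C T, ⟨?_, Or.inr hT.2.1, ?_, ?_⟩, ⟨Set.subset_insert _ _, hpred⟩, ?_⟩
  · rintro A (rfl | hA)
    · exact hC
    · exact hT.1 A hA
  · rintro s (rfl | hs) t (rfl | ht) hst hts
    · rfl
    · exact absurd hts (h1 t ht)
    · exact absurd hst (h1 s hs)
    · exact hT.2.2.1 s hs t ht hst hts
  · rintro t (rfl | ht) S hS hne
    · by_cases hex : ∃ s ∈ S, s ∈ T
      · obtain ⟨s, hsS, hsT⟩ := hex
        obtain ⟨m, ⟨hm, hmT⟩, hmax⟩ := hT.2.2.2 s hsT (S ∩ StarPred T s) Set.inter_subset_right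
          ⟨s, hsS, hsT, as_refl s⟩
        have hsm := hmax s ⟨hsS, hsT, as_refl s⟩
        refine ⟨m, hm, fun r hr => ?_⟩
        rcases (hS hr).1 with rfl | hrT
        · exact (hS hm).2
        · rcases h2 r hrT s hsT (hS hr).2 (hS hsS).2 with h | h
          · exact as_trans h hsm
          · exact hmax r ⟨hr, hrT, h⟩
      · obtain ⟨s, hs⟩ := hne
        refine ⟨s, hs, fun r hr => ?_⟩
        have e : ∀ x ∈ S, x = t := fun x hx => by
          rcases (hS hx).1 with h | h
          · exact h
          · exact absurd ⟨x, hx, h⟩ hex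
        rw [e s hs, e r hr]
        exact as_refl t
    · rw [hpred t ht] at hS
      exact hT.2.2.2 t ht S hS hne
  · intro h
    exact hCT (h ▸ Set.mem_insert C T)

@[ext] structure StarNode (T : Set (Set ℕ)) where
  val : Set ℕ
  prop : val ∈ T

/-- There is no maximal subtree of `([ω]^ω, ⊆*)` with all levels countable: every
subtree with countable levels admits a proper end-extension. -/
theorem no_maximal_tree_countable_levels (T : Set (Set ℕ))
    (hT : IsStarTree T) (hlev : CountableLevels T) :
    ∃ T' : Set (Set ℕ), IsStarTree T' ∧ StarEndExt T T' ∧ T' ≠ T := by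
  by_contra hno
  let _ : PartialOrder (StarNode T) :=
    { le := fun a b => AlmostSubset a.1 b.1
      le_refl := fun a => as_refl _
      le_trans := fun a b c => as_trans
      le_antisymm := fun a b h1 h2 => StarNode.ext (hT.2.2.1 _ a.2 _ b.2 h1 h2) }
  have hle : ∀ a b : StarNode T, a ≤ b ↔ AlmostSubset a.1 b.1 := fun a b => Iff.rfl
  have hc : ∀ a b c : StarNode T, a ≤ b → a ≤ c → b ≤ c ∨ c ≤ b := fun a b c h1 h2 =>
    star_chain hT a.2 b.2 c.2 h1 h2
  have : WellFoundedGT (StarNode T) := by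
    refine ⟨WellFounded.wellFounded_iff_has_min.2 ?_⟩
    rintro S ⟨t, ht⟩
    obtain ⟨m, ⟨⟨m', hm', rfl⟩, hm2⟩, hmax⟩ := hT.2.2.2 t.1 t.2
      ((StarNode.val '' S) ∩ StarPred T t.1) Set.inter_subset_right
      ⟨t.1, ⟨t, ht, rfl⟩, t.2, as_refl _⟩
    refine ⟨m', hm', fun x hx hlt => ?_⟩
    have hlt' : m' < x := hlt
    have : x ≤ m' := hmax x.1 ⟨⟨x, hx, rfl⟩, x.2, as_trans hm2.2 hlt'.le⟩
    exact absurd this (not_le_of_gt hlt')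
  have : Nonempty (StarNode T) := ⟨⟨Set.univ, hT.2.1⟩⟩
  -- ranks and levels
  have hrkinj : ∀ t a b : StarNode T, t ≤ a → t ≤ b → rkk a ≤ rkk b → b ≤ a := by
    intro t a b ha hb hab
    rcases hc t a b ha hb with h | h
    · rcases h.eq_or_lt with h | h
      · exact h.ge
      · exact absurd (rkk_anti h) (not_lt.2 hab)
    · exact h
  have hrkmono : ∀ a b : StarNode T, b ≤ a → rkk a ≤ rkk b := by
    intro a b h
    rcases h.eq_or_lt with h | h
    · rw [h]
    · exact (rkk_anti h).le
  have hsame : ∀ s t : StarNode T, rkk s = rkk t → SameLevel T s.1 t.1 := by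
    have hmap : ∀ s t : StarNode T, rkk s = rkk t → ∀ a : StarPred T s.1, ∃ b : StarPred T t.1,
        rkk (⟨b.1, b.2.1⟩ : StarNode T) = rkk (⟨a.1, a.2.1⟩ : StarNode T) := by
      intro s t hst a
      obtain ⟨b, hb, hb2⟩ := rkk_anc t (rkk (⟨a.1, a.2.1⟩ : StarNode T))
        (hst ▸ hrkmono ⟨a.1, a.2.1⟩ s a.2.2)
      exact ⟨⟨b.1, b.2, hb⟩, hb2⟩
    have hcmp : ∀ (t : StarNode T) (a b : StarPred T t.1), AlmostSubset a.1 b.1 ↔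
        rkk (⟨b.1, b.2.1⟩ : StarNode T) ≤ rkk (⟨a.1, a.2.1⟩ : StarNode T) := by
      intro t a b
      exact ⟨fun h => hrkmono ⟨b.1, b.2.1⟩ ⟨a.1, a.2.1⟩ h,
        fun h => hrkinj t ⟨b.1, b.2.1⟩ ⟨a.1, a.2.1⟩ b.2.2 a.2.2 h⟩
    have huniq : ∀ (t : StarNode T) (a b : StarPred T t.1),
        rkk (⟨a.1, a.2.1⟩ : StarNode T) = rkk (⟨b.1, b.2.1⟩ : StarNode T) → a = b := by
      intro t a b h
      exact Subtype.ext (hT.2.2.1 _ a.2.1 _ b.2.1 ((hcmp t a b).2 h.ge) ((hcmp t b a).2 h.le))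
    intro s t hst
    choose f hf using hmap s t hst
    choose g hg using hmap t s hst.symm
    refine ⟨⟨⟨f, g, fun a => ?_, fun b => ?_⟩, ?_⟩⟩
    · exact huniq s _ _ ((hg _).trans (hf _))
    · exact huniq t _ _ ((hf _).trans (hg _))
    · intro a b
      change AlmostSubset (f a).1 (f b).1 ↔ AlmostSubset a.1 b.1
      rw [hcmp t, hcmp s, hf, hf]
  have hl : ∀ β, {a : StarNode T | rkk a = β}.Countable := by
    intro β
    rcases Set.eq_empty_or_nonempty {a : StarNode T | rkk a = β} with h | ⟨t, ht⟩
    · simp [h]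
    · have h := (hlev t.1 t.2).preimage (f := (StarNode.val : StarNode T → Set ℕ)) (fun _ _ h => StarNode.ext h)
      refine h.mono ?_
      intro a ha
      exact ⟨a.2, hsame a t (ha.trans ht.symm)⟩
  refine absMain hc hl ?_
  -- extension property
  intro b hb hoff
  obtain ⟨C0, C1, hdis, hi0, hi1, hb0, hb1, hs0, hs1⟩ := star_diag (fun n => (b n).1)
    (fun j k hjk => hb hjk) (StarNode.val '' OffP {p : StarNode T | ∃ n, b n ≤ p}) (hoff.image _)
    (by
      rintro _ ⟨s, hs, rfl⟩ n h
      exact hs.1 ⟨n, h⟩)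
    (fun n => hT.1 _ (b n).2)
  have key : ∀ C : Set ℕ, C.Infinite → 
      (∀ s ∈ (StarNode.val '' OffP {p : StarNode T | ∃ n, b n ≤ p}), ¬ AlmostSubset C s) →
      ∃ B : StarNode T, AlmostSubset B.1 C := by
    intro C hC hs
    by_contra hB
    push Not at hB
    refine hno (star_extend hT hC (fun B hBT => hB ⟨B, hBT⟩) ?_)
    have hup : ∀ B (hBT : B ∈ T), AlmostSubset C B → ∃ n, b n ≤ ⟨B, hBT⟩ := by
      intro B hBT hCB
      by_contra hP
      obtain ⟨m, hm, hBm⟩ := exists_offP (P := {p : StarNode T | ∃ n, b n ≤ p}) hP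
      exact hs m.1 ⟨m, hm, rfl⟩ (as_trans hCB hBm)
    intro B hBT B' hBT' h h'
    obtain ⟨n, hn⟩ := hup B hBT h
    obtain ⟨k, hk⟩ := hup B' hBT' h'
    exact hc (b (max n k)) ⟨B, hBT⟩ ⟨B', hBT'⟩ ((hb (le_max_left _ _)).trans hn)
      ((hb (le_max_right _ _)).trans hk)
  obtain ⟨B0, hB0⟩ := key C0 hi0 hs0
  obtain ⟨B1, hB1⟩ := key C1 hi1 hs1
  have hnot : ∀ (A B C D : Set ℕ), A.Infinite → Disjoint C D → AlmostSubset A C →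
      AlmostSubset B D → ¬ AlmostSubset A B := by
    intro A B C D hA hCD hAC hBD hAB
    have hAD := as_trans hAB hBD
    refine hA ((Set.Finite.union hAC hAD).subset ?_)
    intro x hx
    by_cases h : x ∈ C
    · exact Or.inr ⟨hx, Set.disjoint_left.1 hCD h⟩
    · exact Or.inl ⟨hx, h⟩
  exact ⟨B0, B1, hnot _ _ _ _ (hT.1 _ B0.2) hdis hB0 hB1,
    hnot _ _ _ _ (hT.1 _ B1.2) hdis.symm hB1 hB0,
    fun n => ⟨as_trans hB0 (hb0 n), as_trans hB1 (hb1 n)⟩⟩
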